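/- Let α ∈ (0, 1) be a real number. Suppose that for every real ε > 0 there exists a constant C(ε) > 0 such that every connected graph G' on m vertices has a +⌈C(ε)·m^{α+ε}⌉ additive emulator with at most C(ε)·m edges. Then for every real ε > 0 there exists a constant C'(ε) > 0 such that every connected graph G on n vertices has a +⌈C'(ε)·n^{1/(6−4α)+ε}⌉ additive emulator with at most C'(ε)·n edges. -/

import Mathlib

open SimpleGraph

/-- The weighted distance in an emulator `H` with edge weights `w`:
the minimum total weight of a walk from `s` to `t` (`⊤` if none exists). -/
noncomputable def emulatorDist {V : Type*} (H : SimpleGraph V) (w : Sym2 V → ℕ)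
    (s t : V) : ℕ∞ :=
  ⨅ p : H.Walk s t, ((p.edges.map w).sum : ℕ∞)

/-- `H` (with positive integer edge weights `w`) is a `+k` additive emulator of `G`:
for all vertices `s, t`, `dist_G(s,t) ≤ dist_H(s,t) ≤ dist_G(s,t) + k`. -/
def IsAdditiveEmulator {V : Type*} (G H : SimpleGraph V) (w : Sym2 V → ℕ)
    (k : ℕ) : Prop :=
  (∀ e ∈ H.edgeSet, 0 < w e) ∧
  ∀ s t : V, (G.dist s t : ℕ∞) ≤ emulatorDist H w s t ∧
    emulatorDist H w s t ≤ (G.dist s t : ℕ∞) + (k : ℕ∞)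


section Emul
variable {V : Type*}

inductive Reach (G : SimpleGraph V) (E : Set (Sym2 V)) : V → V → ℕ → Prop
  | refl (u : V) : Reach G E u u 0
  | step {u v x : V} {l : ℕ} (h : s(u, v) ∈ E) (h2 : Reach G E v x l) :
      Reach G E u x (G.dist u v + l)

lemma Reach.mono {G : SimpleGraph V} {E E' : Set (Sym2 V)} (hE : E ⊆ E') {u v : V} {l : ℕ}
    (h : Reach G E u v l) : Reach G E' u v l := by
  induction h with
  | refl u => exact Reach.refl u
  | step h _ ih => exact Reach.step (hE h) ih

lemma Reach.trans {G : SimpleGraph V} {E : Set (Sym2 V)} {u v x : V} {l l' : ℕ}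
    (h : Reach G E u v l) (h' : Reach G E v x l') : Reach G E u x (l + l') := by
  induction h with
  | refl u => simpa using h'
  | step h _ ih => rw [add_assoc]; exact Reach.step h (ih h')

lemma Reach.edge {G : SimpleGraph V} {E : Set (Sym2 V)} {u v : V} (h : s(u, v) ∈ E) :
    Reach G E u v (G.dist u v) := by
  simpa using Reach.step h (Reach.refl v)

lemma Reach.symm {G : SimpleGraph V} {E : Set (Sym2 V)} {u v : V} {l : ℕ}
    (h : Reach G E u v l) : Reach G E v u l := by
  induction h with
  | refl u => exact Reach.refl u
  | @step u v x l h _ ih =>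
    rw [add_comm, SimpleGraph.dist_comm]
    exact ih.trans (Reach.edge (by rwa [Sym2.eq_swap]))

/-- real-bounded reachability -/
def RB (G : SimpleGraph V) (E : Set (Sym2 V)) (u v : V) (x : ℝ) : Prop :=
  ∃ l : ℕ, Reach G E u v l ∧ (l : ℝ) ≤ x

lemma RB.mono {G : SimpleGraph V} {E E' : Set (Sym2 V)} (hE : E ⊆ E') {u v : V} {x y : ℝ}
    (h : RB G E u v x) (hxy : x ≤ y) : RB G E' u v y := by
  obtain ⟨l, h1, h2⟩ := h
  exact ⟨l, h1.mono hE, h2.trans hxy⟩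

lemma RB.trans {G : SimpleGraph V} {E : Set (Sym2 V)} {u v z : V} {x y : ℝ}
    (h : RB G E u v x) (h' : RB G E v z y) : RB G E u z (x + y) := by
  obtain ⟨l, h1, h2⟩ := h
  obtain ⟨l', h1', h2'⟩ := h'
  exact ⟨l + l', h1.trans h1', by push_cast; linarith⟩

lemma RB.symm {G : SimpleGraph V} {E : Set (Sym2 V)} {u v : V} {x : ℝ}
    (h : RB G E u v x) : RB G E v u x := by
  obtain ⟨l, h1, h2⟩ := h
  exact ⟨l, h1.symm, h2⟩

lemma RB.edge {G : SimpleGraph V} {E : Set (Sym2 V)} {u v : V} (h : s(u, v) ∈ E) :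
    RB G E u v (G.dist u v) := ⟨_, Reach.edge h, le_rfl⟩

/-- weight function -/
noncomputable def dw (G : SimpleGraph V) : Sym2 V → ℕ :=
  Sym2.lift ⟨fun u v => G.dist u v, fun _ _ => SimpleGraph.dist_comm⟩

lemma dw_mk (G : SimpleGraph V) (u v : V) : dw G s(u, v) = G.dist u v := rfl

lemma Reach.walk {G : SimpleGraph V} {E : Set (Sym2 V)} {u v : V} {l : ℕ}
    (h : Reach G E u v l) :
    ∃ p : (SimpleGraph.fromEdgeSet E).Walk u v, (p.edges.map (dw G)).sum ≤ l := by
  induction h with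
  | refl u => exact ⟨SimpleGraph.Walk.nil, by simp⟩
  | @step u v x l h _ ih =>
    obtain ⟨p, hp⟩ := ih
    by_cases huv : u = v
    · subst huv
      exact ⟨p, by omega⟩
    · refine ⟨SimpleGraph.Walk.cons ((SimpleGraph.fromEdgeSet_adj E).2 ⟨h, huv⟩) p, ?_⟩
      simp only [SimpleGraph.Walk.edges_cons, List.map_cons, List.sum_cons, dw_mk]
      omega

lemma walk_dist_le {G H : SimpleGraph V} (hG : G.Connected) {u v : V} (p : H.Walk u v) :
    G.dist u v ≤ (p.edges.map (dw G)).sum := by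
  induction p with
  | nil => simp
  | @cons u v x h p ih =>
    simp only [SimpleGraph.Walk.edges_cons, List.map_cons, List.sum_cons, dw_mk]
    have := hG.dist_triangle (u := u) (v := v) (w := x)
    omega

lemma emulator_of_RB {G : SimpleGraph V} (hG : G.Connected) (E : Set (Sym2 V)) (k : ℕ)
    (h : ∀ s t, RB G E s t (G.dist s t + k)) :
    IsAdditiveEmulator G (SimpleGraph.fromEdgeSet E) (dw G) k := by
  refine ⟨?_, fun s t => ⟨?_, ?_⟩⟩
  · intro e
    induction e with
    | _ u v =>
      intro he
      rw [SimpleGraph.mem_edgeSet] at he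
      rw [dw_mk]
      exact hG.pos_dist_of_ne he.ne
  · refine le_iInf fun p => ?_
    exact_mod_cast walk_dist_le hG p
  · obtain ⟨l, h1, h2⟩ := h s t
    obtain ⟨p, hp⟩ := h1.walk
    refine (iInf_le _ p).trans ?_
    have : l ≤ G.dist s t + k := by exact_mod_cast h2
    exact_mod_cast hp.trans this

open Classical in
/-- ball -/
noncomputable def bl [Fintype V] (G : SimpleGraph V) (c : V) (k : ℕ) : Finset V :=
  Finset.univ.filter fun x => G.dist c x ≤ k

open Classical in
/-- sphere -/
noncomputable def sp [Fintype V] (G : SimpleGraph V) (c : V) (k : ℕ) : Finset V :=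
  Finset.univ.filter fun x => G.dist c x = k

lemma mem_bl [Fintype V] {G : SimpleGraph V} {c x : V} {k : ℕ} :
    x ∈ bl G c k ↔ G.dist c x ≤ k := by simp [bl]

lemma mem_sp [Fintype V] {G : SimpleGraph V} {c x : V} {k : ℕ} :
    x ∈ sp G c k ↔ G.dist c x = k := by simp [sp]

lemma bl_mono [Fintype V] (G : SimpleGraph V) (c : V) {k l : ℕ} (h : k ≤ l) :
    bl G c k ⊆ bl G c l := by
  intro x hx
  rw [mem_bl] at *
  omega

lemma bl_pos [Fintype V] (G : SimpleGraph V) (c : V) (k : ℕ) : 1 ≤ (bl G c k).card := by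
  rw [Nat.one_le_iff_ne_zero, ← Nat.pos_iff_ne_zero, Finset.card_pos]
  exact ⟨c, by simp [mem_bl]⟩

/-- vertices on a shortest walk satisfy equality -/
lemma walk_geod {G : SimpleGraph V} (hG : G.Connected) {x y u : V} (p : G.Walk x y)
    (hp : p.length = G.dist x y) (hu : u ∈ p.support) :
    G.dist x u + G.dist u y = G.dist x y := by
  classical
  have h1 := SimpleGraph.dist_le (p.takeUntil u hu)
  have h2 := SimpleGraph.dist_le (p.dropUntil u hu)
  have h3 := congrArg SimpleGraph.Walk.length (p.take_spec hu)
  rw [SimpleGraph.Walk.length_append] at h3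
  have := hG.dist_triangle (u := x) (v := u) (w := y)
  omega

lemma induce_dist_le [Fintype V] {G : SimpleGraph V} (hG : G.Connected) (B : Set V) (x y : V)
    (h : ∀ u, G.dist x u + G.dist u y = G.dist x y → u ∈ B) (hx : x ∈ B) (hy : y ∈ B) :
    (G.induce B).Reachable ⟨x, hx⟩ ⟨y, hy⟩ ∧ (G.induce B).dist ⟨x, hx⟩ ⟨y, hy⟩ ≤ G.dist x y := by
  obtain ⟨p, hp⟩ := hG.exists_walk_length_eq_dist x y
  have hp' : ∀ u ∈ p.support, u ∈ B := fun u hu => h u (walk_geod hG p hp hu)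
  have := SimpleGraph.dist_le (p.induce B hp')
  refine ⟨⟨p.induce B hp'⟩, this.trans ?_⟩
  rw [← hp]
  have h4 := congrArg SimpleGraph.Walk.length (SimpleGraph.Walk.map_induce p hp')
  rw [SimpleGraph.Walk.length_map] at h4
  exact h4.le

lemma dist_le_of_hom {W : Type*} {G : SimpleGraph V} {G' : SimpleGraph W} (f : G' →g G)
    {x y : W} (h : G'.Reachable x y) : G.dist (f x) (f y) ≤ G'.dist x y := by
  obtain ⟨p, hp⟩ := h.exists_walk_length_eq_dist
  rw [← hp, ← SimpleGraph.Walk.length_map f p]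
  exact SimpleGraph.dist_le _

lemma emul_edge {W : Type*} {G H : SimpleGraph W} {w : Sym2 W → ℕ} {k : ℕ}
    (h : IsAdditiveEmulator G H w k) {x y : W} (hxy : H.Adj x y) : G.dist x y ≤ w s(x, y) := by
  have h1 := (h.2 x y).1
  have h2 : emulatorDist H w x y ≤ _ := iInf_le _ (SimpleGraph.Walk.cons hxy SimpleGraph.Walk.nil)
  have := h1.trans h2
  simp at this
  exact_mod_cast this

lemma emul_walk {W : Type*} {G H : SimpleGraph W} {w : Sym2 W → ℕ} {k : ℕ}
    (h : IsAdditiveEmulator G H w k) (x y : W) : 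
    ∃ p : H.Walk x y, (p.edges.map w).sum ≤ G.dist x y + k := by
  by_contra hcon
  push Not at hcon
  have h2 := (h.2 x y).2
  have : ((G.dist x y + k + 1 : ℕ) : ℕ∞) ≤ emulatorDist H w x y := by
    refine le_iInf fun p => ?_
    exact_mod_cast hcon p
  have := this.trans h2
  have h3 : G.dist x y + k + 1 ≤ G.dist x y + k := by exact_mod_cast this
  omega

lemma walk_reach {W : Type*} {G : SimpleGraph V} {G' H' : SimpleGraph W} (hG' : G'.Connected)
    {w : Sym2 W → ℕ} {k : ℕ}
    (h : IsAdditiveEmulator G' H' w k) (f : G' →g G) {x y : W} (p : H'.Walk x y) :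
    ∃ l, Reach G (Sym2.map f '' H'.edgeSet) (f x) (f y) l ∧ l ≤ (p.edges.map w).sum := by
  induction p with
  | nil => exact ⟨0, Reach.refl _, by simp⟩
  | @cons u v x hh p ih =>
    obtain ⟨l, h1, h2⟩ := ih
    refine ⟨_, Reach.step ⟨s(u, v), hh, by simp⟩ h1, ?_⟩
    simp only [SimpleGraph.Walk.edges_cons, List.map_cons, List.sum_cons]
    have a := emul_edge h hh
    have b := dist_le_of_hom f (hG' u v)
    omega

/-- local emulators in balls -/
lemma local_emul [Fintype V] {G : SimpleGraph V} (hG : G.Connected) (C β : ℝ)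
    (hyp : ∀ m : ℕ, ∀ G' : SimpleGraph (Fin m), G'.Connected →
        ∃ (H' : SimpleGraph (Fin m)) (w' : Sym2 (Fin m) → ℕ),
          IsAdditiveEmulator G' H' w' ⌈C * (m : ℝ) ^ β⌉₊ ∧
          (H'.edgeSet.ncard : ℝ) ≤ C * m) (c : V) (ρ : ℕ) :
    ∃ E : Set (Sym2 V), (E.ncard : ℝ) ≤ C * (bl G c (2 * ρ)).card ∧
      ∀ x y, G.dist c x ≤ ρ → G.dist c y ≤ ρ →
        RB G E x y (G.dist x y + ⌈C * ((bl G c (2 * ρ)).card : ℝ) ^ β⌉₊) := by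
  classical
  set B := bl G c (2 * ρ) with hB
  let e : Fin B.card ≃ (B : Set V) := B.equivFin.symm
  let G1 := G.induce (B : Set V)
  let G' : SimpleGraph (Fin B.card) := G1.comap e
  let i : G' ≃g G1 := SimpleGraph.Iso.comap e G1
  have hc : c ∈ (B : Set V) := by simp [hB, mem_bl]
  have hG1 : G1.Connected := by
    rw [SimpleGraph.connected_iff_exists_forall_reachable]
    refine ⟨⟨c, hc⟩, fun ⟨y, hy⟩ => ?_⟩
    refine (induce_dist_le hG (B : Set V) c y (fun u hu => ?_) hc hy).1
    have hy' : G.dist c y ≤ 2 * ρ := by simpa [hB, mem_bl] using hy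
    simp only [hB, Finset.mem_coe, mem_bl]; omega
  have hG' : G'.Connected := i.connected_iff.2 hG1
  obtain ⟨H', w', he, hcard⟩ := hyp _ G' hG'
  let f : G' →g G := (SimpleGraph.Embedding.induce (B : Set V)).toHom.comp i.toHom
  refine ⟨Sym2.map f '' H'.edgeSet, ?_, ?_⟩
  · refine le_trans ?_ hcard
    exact_mod_cast Set.ncard_image_le (Set.toFinite _)
  · intro x y hx hy
    have hxB : x ∈ (B : Set V) := by simp only [hB, Finset.mem_coe, mem_bl]; omega
    have hyB : y ∈ (B : Set V) := by simp only [hB, Finset.mem_coe, mem_bl]; omega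
    have h1 := (induce_dist_le hG (B : Set V) x y (fun u hu => ?_) hxB hyB).2
    · obtain ⟨p, hp⟩ := emul_walk he (i.symm ⟨x, hxB⟩) (i.symm ⟨y, hyB⟩)
      obtain ⟨l, h2, h3⟩ := walk_reach hG' he f p
      have h4 : G'.dist (i.symm ⟨x, hxB⟩) (i.symm ⟨y, hyB⟩) ≤ G1.dist ⟨x, hxB⟩ ⟨y, hyB⟩ :=
        dist_le_of_hom i.symm.toHom (hG1 _ _)
      have fx : f (i.symm ⟨x, hxB⟩) = x := by simp [f]
      have fy : f (i.symm ⟨y, hyB⟩) = y := by simp [f]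
      rw [fx, fy] at h2
      refine ⟨l, h2, ?_⟩
      have : l ≤ G.dist x y + ⌈C * (B.card : ℝ) ^ β⌉₊ := by
        have h1' : G1.dist ⟨x, hxB⟩ ⟨y, hyB⟩ ≤ G.dist x y := h1
        omega
      exact_mod_cast this
    · simp only [hB, Finset.mem_coe, mem_bl]
      have a1 := hG.dist_triangle (u := c) (v := x) (w := u)
      have a2 := hG.dist_triangle (u := c) (v := y) (w := u)
      have a3 := hG.dist_triangle (u := x) (v := c) (w := y)
      rw [G.dist_comm (u := x) (v := c)] at a3
      rw [G.dist_comm (u := u) (v := y)] at hu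
      omega

/-- greedy hitting set -/
lemma hitting {ι : Type*} [DecidableEq V] (T : Finset ι) (X : ι → Finset V) (L : Finset V) (a : V → ℝ)
    (ha : ∀ v, 0 ≤ a v) (b : ℝ) (hb : 0 < b) (hX : ∀ i ∈ T, X i ⊆ L ∧ b ≤ ∑ v ∈ X i, a v) (A : ℝ)
    (hA : ∑ v ∈ L, a v ≤ A) (hA0 : 0 < A) :
    ∃ Z : Finset V, (Z.card : ℝ) ≤ A / b * Real.log T.card + 1 ∧ Z ⊆ L ∧
      ∀ i ∈ T, ∃ v ∈ Z, v ∈ X i := by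
  classical
  rcases T.eq_empty_or_nonempty with rfl | hT
  · exact ⟨∅, by simp, by simp, by simp⟩
  have hbA : b ≤ A := by
    obtain ⟨i, hi⟩ := hT
    exact (hX i hi).2.trans ((Finset.sum_le_sum_of_subset_of_nonneg (hX i hi).1
      (fun _ _ _ => ha _)).trans hA)
  have key : ∀ k : ℕ, ∃ Z : Finset V, Z.card ≤ k ∧ Z ⊆ L ∧
      ((T.filter fun i => ∀ v ∈ Z, v ∉ X i).card : ℝ) ≤ T.card * (1 - b / A) ^ k := by
    intro k
    induction k with
    | zero => exact ⟨∅, by simp, by simp, by simp⟩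
    | succ k ih =>
      obtain ⟨Z, hZ, hZL, hc⟩ := ih
      set F := T.filter fun i => ∀ v ∈ Z, v ∉ X i with hF
      have havg : ∃ c ∈ L, b / A * F.card ≤ ((F.filter fun i => c ∈ X i).card : ℝ) := by
        by_contra hcon
        push Not at hcon
        have h1 : ∑ i ∈ F, ∑ v ∈ X i, a v = ∑ v ∈ L, a v * ((F.filter fun i => v ∈ X i).card : ℝ) := by
          have : ∀ i ∈ F, ∑ v ∈ X i, a v = ∑ v ∈ L, if v ∈ X i then a v else 0 := by
            intro i hi
            rw [← Finset.sum_filter]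
            congr 1
            have := (hX i (Finset.mem_filter.1 hi).1).1
            ext v
            simp only [Finset.mem_filter]
            exact ⟨fun h => ⟨this h, h⟩, fun h => h.2⟩
          rw [Finset.sum_congr rfl this, Finset.sum_comm]
          refine Finset.sum_congr rfl fun v _ => ?_
          rw [← Finset.sum_filter, Finset.sum_const, nsmul_eq_mul, mul_comm]
        have h2 : b * F.card ≤ ∑ i ∈ F, ∑ v ∈ X i, a v := by
          have := Finset.card_nsmul_le_sum F (fun i => ∑ v ∈ X i, a v) b
            (fun i hi => (hX i (Finset.mem_filter.1 hi).1).2)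
          rwa [nsmul_eq_mul, mul_comm] at this
        rw [h1] at h2
        obtain ⟨i0, hi0⟩ := hT
        have hpos : ∃ v ∈ L, 0 < a v := by
          by_contra hh
          push Not at hh
          have := (hX i0 hi0).2.trans (Finset.sum_nonpos fun v hv => hh v ((hX i0 hi0).1 hv))
          linarith
        have h3 : ∑ v ∈ L, a v * ((F.filter fun i => v ∈ X i).card : ℝ) 
            < ∑ v ∈ L, a v * (b / A * F.card) := by
          obtain ⟨v0, hv0, hp⟩ := hpos
          refine Finset.sum_lt_sum (fun v hv => ?_) ⟨v0, hv0, ?_⟩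
          · exact mul_le_mul_of_nonneg_left (hcon v hv).le (ha v)
          · exact mul_lt_mul_of_pos_left (hcon v0 hv0) hp
        rw [← Finset.sum_mul] at h3
        have h4 : (∑ v ∈ L, a v) * (b / A * F.card) ≤ A * (b / A * F.card) := by
          gcongr
        have h5 : A * (b / A * F.card) = b * F.card := by field_simp
        linarith
      obtain ⟨c, hcL, hcc⟩ := havg
      refine ⟨insert c Z, (Finset.card_insert_le _ _).trans (by omega), 
        Finset.insert_subset hcL hZL, ?_⟩
      have hsub : (T.filter fun i => ∀ v ∈ insert c Z, v ∉ X i) = F.filter fun i => ¬ c ∈ X i := by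
        ext i
        simp only [hF, Finset.mem_filter, Finset.mem_insert, forall_eq_or_imp]
        tauto
      rw [hsub]
      have h6 := Finset.card_filter_add_card_filter_not (s := F) (fun i => c ∈ X i)
      have h6' : ((F.filter fun i => c ∈ X i).card : ℝ) + ((F.filter fun i => ¬ c ∈ X i).card : ℝ) = F.card := by
        exact_mod_cast h6
      have h7 : 0 ≤ 1 - b / A := by
        rw [sub_nonneg, div_le_one hA0]; exact hbA
      calc ((F.filter fun i => ¬ c ∈ X i).card : ℝ) ≤ (1 - b / A) * F.card := by linarith
        _ ≤ (1 - b / A) * (T.card * (1 - b / A) ^ k) := by gcongr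
        _ = _ := by ring
  have hlog : 0 ≤ A / b * Real.log T.card := by
    have : 0 ≤ Real.log T.card := Real.log_natCast_nonneg _
    positivity
  set k := ⌊A / b * Real.log T.card⌋₊ + 1 with hk
  obtain ⟨Z, hZ, hZL, hc⟩ := key k
  refine ⟨Z, ?_, hZL, ?_⟩
  · have h1 : (Z.card : ℝ) ≤ k := by exact_mod_cast hZ
    have h2 := Nat.floor_le hlog
    rw [hk] at h1
    push_cast at h1
    linarith
  · have hTpos : (0 : ℝ) < T.card := by exact_mod_cast hT.card_pos
    have hkl : A / b * Real.log T.card < k := by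
      rw [hk]; push_cast; exact Nat.lt_floor_add_one _
    have h7 : 0 ≤ 1 - b / A := by
      rw [sub_nonneg, div_le_one hA0]; exact hbA
    have h8 : (1 - b / A) ^ k ≤ Real.exp (-(b / A) * k) := by
      calc (1 - b / A) ^ k ≤ (Real.exp (-(b / A))) ^ k := by
            gcongr
            linarith [Real.add_one_le_exp (-(b / A))]
        _ = _ := by rw [← Real.exp_nat_mul]; ring_nf
    have h9 : Real.log T.card < b / A * k := by
      have : b / A * (A / b * Real.log T.card) < b / A * k := by gcongr
      have e : b / A * (A / b * Real.log T.card) = Real.log T.card := by field_simp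
      linarith
    have h10 : (T.card : ℝ) * Real.exp (-(b / A) * k) < 1 := by
      calc (T.card : ℝ) * Real.exp (-(b / A) * k) < T.card * Real.exp (- Real.log T.card) := by
            gcongr; linarith
        _ = 1 := by rw [Real.exp_neg, Real.exp_log hTpos]; field_simp
    have h11 : ((T.filter fun i => ∀ v ∈ Z, v ∉ X i).card : ℝ) < 1 := by
      calc _ ≤ _ := hc
        _ ≤ (T.card : ℝ) * Real.exp (-(b / A) * k) := by gcongr
        _ < 1 := h10
    have h12 : (T.filter fun i => ∀ v ∈ Z, v ∉ X i).card = 0 := by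
      have : (T.filter fun i => ∀ v ∈ Z, v ∉ X i).card < 1 := by exact_mod_cast h11
      omega
    rw [Finset.card_eq_zero, Finset.filter_eq_empty_iff] at h12
    intro i hi
    have := h12 hi
    push Not at this
    exact this


lemma growth [Fintype V] (G : SimpleGraph V) (D : ℝ) (hD : 1 < D) (r : ℕ) (v : V) :
    ∃ j : ℕ, D ^ j ≤ Fintype.card V ∧
      ((bl G v (8 * (r * 8 ^ j))).card : ℝ) ≤ D * (bl G v (r * 8 ^ j)).card := by
  classical
  have hcard : ∀ k, ((bl G v k).card : ℝ) ≤ Fintype.card V := fun k => by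
    exact_mod_cast Finset.card_le_univ _
  have key : ∀ j : ℕ, (∀ i < j, ¬ ((bl G v (8 * (r * 8 ^ i))).card : ℝ) ≤ D * (bl G v (r * 8 ^ i)).card) →
      D ^ j ≤ (bl G v (r * 8 ^ j)).card := by
    intro j
    induction j with
    | zero => intro _; simpa using bl_pos G v r
    | succ j ih =>
      intro h
      have h1 := ih (fun i hi => h i (by omega))
      have h2 := h j (by omega)
      push Not at h2
      rw [show r * 8 ^ (j + 1) = 8 * (r * 8 ^ j) by ring]
      calc D ^ (j + 1) = D * D ^ j := by ring
        _ ≤ D * (bl G v (r * 8 ^ j)).card := by gcongr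
        _ ≤ _ := h2.le
  have hex : ∃ j : ℕ, ((bl G v (8 * (r * 8 ^ j))).card : ℝ) ≤ D * (bl G v (r * 8 ^ j)).card := by
    by_contra hcon
    push Not at hcon
    obtain ⟨j, hj⟩ := pow_unbounded_of_one_lt (Fintype.card V : ℝ) hD
    have := (key j (fun i _ => not_le.2 (hcon i))).trans (hcard _)
    linarith
  refine ⟨Nat.find hex, ?_, Nat.find_spec hex⟩
  exact (key _ (fun i hi => Nat.find_min hex hi)).trans (hcard _)

lemma sphere_avg [Fintype V] (G : SimpleGraph V) (c : V) (k : ℕ) (hk : 0 < k) :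
    ∃ ρ, 3 * k < ρ ∧ ρ ≤ 4 * k ∧ (sp G c ρ).card * k ≤ (bl G c (4 * k)).card := by
  classical
  by_contra hcon
  push Not at hcon
  have h1 : ∑ ρ ∈ Finset.Ioc (3 * k) (4 * k), (sp G c ρ).card ≤ (bl G c (4 * k)).card := by
    rw [← Finset.card_biUnion]
    · refine Finset.card_le_card fun x hx => ?_
      simp only [Finset.mem_biUnion, Finset.mem_Ioc, mem_sp] at hx
      obtain ⟨ρ, h, h'⟩ := hx
      rw [mem_bl]; omega
    · intro a _ b _ hab
      change Disjoint _ _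
      rw [Finset.disjoint_left]
      intro x hx hy
      rw [mem_sp] at hx hy
      omega
  have h2 : (bl G c (4 * k)).card * k < ∑ ρ ∈ Finset.Ioc (3 * k) (4 * k), (sp G c ρ).card * k := by
    have : ∑ ρ ∈ Finset.Ioc (3 * k) (4 * k), (bl G c (4 * k)).card
        < ∑ ρ ∈ Finset.Ioc (3 * k) (4 * k), (sp G c ρ).card * k := by
      refine Finset.sum_lt_sum_of_nonempty ⟨4 * k, by simp; omega⟩ fun ρ hρ => ?_
      rw [Finset.mem_Ioc] at hρ
      exact hcon ρ hρ.1 hρ.2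
    rw [Finset.sum_const, Nat.card_Ioc, smul_eq_mul] at this
    rwa [show 4 * k - 3 * k = k by omega, mul_comm] at this
  rw [← Finset.sum_mul] at h2
  have := Nat.mul_le_mul_right k h1
  omega

lemma clusters [Fintype V] {G : SimpleGraph V} (hG : G.Connected) (η : ℝ) (hη : 0 < η)
    (r : ℕ) (hr : 0 < r) :
    ∃ (I : Finset V) (ρ : V → ℕ),
      (∀ v, ∃ c ∈ I, G.dist c v < ρ c) ∧
      (∀ c, (ρ c : ℝ) ≤ 4 * (r * (Fintype.card V : ℝ) ^ η)) ∧
      (∑ c ∈ I, ((bl G c (2 * ρ c)).card : ℝ) ≤ (8 : ℝ) ^ (1 / η) * Fintype.card V) ∧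
      (∀ c, (sp G c (ρ c)).card * r ≤ (bl G c (2 * ρ c)).card) := by
  classical
  set D : ℝ := (8 : ℝ) ^ (1 / η) with hD
  have hD1 : 1 < D := Real.one_lt_rpow (by norm_num) (by positivity)
  choose j hj1 hj2 using growth G D hD1 r
  set base : V → ℕ := fun v => r * 8 ^ (j v) with hbase
  have hb0 : ∀ v, r ≤ base v := fun v => Nat.le_mul_of_pos_right _ (by positivity)
  have hbR : ∀ v, (base v : ℝ) ≤ r * (Fintype.card V : ℝ) ^ η := by
    intro v
    have h8 : (8 : ℝ) ^ (j v) = (D ^ (j v)) ^ η := by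
      rw [hD, ← Real.rpow_natCast, ← Real.rpow_natCast, ← Real.rpow_mul (by positivity),
        ← Real.rpow_mul (by positivity)]
      congr 1; field_simp
    simp only [hbase]; push_cast
    rw [h8]
    gcongr
    exact hj1 v
  obtain ⟨u, -, hu1, hu2⟩ := Vitali.exists_disjoint_subfamily_covering_enlargement
    (fun v => (bl G v (base v) : Set V)) Set.univ (fun v => (base v : ℝ)) 2 (by norm_num)
    (fun _ _ => by positivity) _ (fun v _ => hbR v)
    (fun v _ => ⟨v, by simp [mem_bl]⟩)
  choose ρ hρ1 hρ2 hρ3 using fun c => sphere_avg G c (base c) (lt_of_lt_of_le hr (hb0 c))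
  refine ⟨u.toFinset, ρ, ?_, ?_, ?_, ?_⟩
  · intro v
    obtain ⟨c, hc, ⟨x, hx1, hx2⟩, h3⟩ := hu2 v trivial
    refine ⟨c, by simpa using hc, ?_⟩
    simp only [Finset.mem_coe, mem_bl] at hx1 hx2
    have h3' : base v ≤ 2 * base c := by exact_mod_cast h3
    have := hG.dist_triangle (u := c) (v := x) (w := v)
    rw [G.dist_comm (u := x)] at this
    have := hρ1 c
    omega
  · intro c
    have : (ρ c : ℝ) ≤ 4 * base c := by exact_mod_cast hρ2 c
    linarith [hbR c]
  · calc ∑ c ∈ u.toFinset, ((bl G c (2 * ρ c)).card : ℝ)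
        ≤ ∑ c ∈ u.toFinset, D * ((bl G c (base c)).card : ℝ) := by
          refine Finset.sum_le_sum fun c _ => le_trans ?_ (hj2 c)
          have := hρ2 c
          exact_mod_cast Finset.card_le_card (bl_mono G c (by simp only [hbase] at this; omega))
      _ = D * ((u.toFinset.biUnion fun c => bl G c (base c)).card : ℝ) := by
          rw [← Finset.mul_sum, Finset.card_biUnion]
          · push_cast; rfl
          · intro a ha b hb hab
            have := hu1 (by simpa using ha) (by simpa using hb) hab
            simpa [Function.onFun] using this
      _ ≤ D * Fintype.card V := by
          gcongr
          exact_mod_cast Finset.card_le_univ _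
  · intro c
    have h1 := hρ1 c
    calc _ ≤ (sp G c (ρ c)).card * base c := Nat.mul_le_mul_left _ (hb0 c)
      _ ≤ _ := hρ3 c
      _ ≤ _ := Finset.card_le_card (bl_mono G c (by omega))

lemma next_exists [Fintype V] {G : SimpleGraph V} (hG : G.Connected) (c v t : V) (ρ : ℕ)
    (hv : G.dist c v < ρ) (ht : ρ < G.dist c t) :
    ∃ v', G.dist c v' = ρ ∧ G.dist v v' + G.dist v' t = G.dist v t ∧
      ∀ x, G.dist v' x + G.dist x t = G.dist v' t → G.dist c x < ρ → False := by
  classical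
  obtain ⟨v', hv', hmin⟩ := Finset.exists_min_image
    (Finset.univ.filter fun x => G.dist v x + G.dist x t = G.dist v t ∧ G.dist c x ≤ ρ)
    (fun x => G.dist x t) ⟨v, by simp; omega⟩
  simp only [Finset.mem_filter, Finset.mem_univ, true_and] at hv' hmin
  obtain ⟨h1, h2⟩ := hv'
  have trans : ∀ x, G.dist v' x + G.dist x t = G.dist v' t →
      G.dist v x + G.dist x t = G.dist v t := by
    intro x hx
    have a := hG.dist_triangle (u := v) (v := v') (w := x)
    have b := hG.dist_triangle (u := v) (v := x) (w := t)
    omega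
  have hs : G.dist c v' = ρ := by
    by_contra hne
    have hlt : G.dist c v' < ρ := by omega
    obtain ⟨p, hp⟩ := hG.exists_walk_length_eq_dist v' t
    cases p with
    | nil => omega
    | @cons _ x _ h p =>
      rw [SimpleGraph.Walk.length_cons] at hp
      have e1 := SimpleGraph.dist_le p
      have e2 : G.dist v' x = 1 := SimpleGraph.dist_eq_one_iff_adj.2 h
      have e3 := hG.dist_triangle (u := v') (v := x) (w := t)
      have e4 := hG.dist_triangle (u := c) (v := v') (w := x)
      have := hmin x ⟨trans x (by omega), by omega⟩
      omega
  refine ⟨v', hs, h1, fun x hx hlt => ?_⟩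
  have h3 := hmin x ⟨trans x hx, hlt.le⟩
  have h4 : G.dist v' x = 0 := by omega
  have h5 : v' = x := (hG.dist_eq_zero_iff).1 h4
  subst h5
  omega

lemma star_reach [Fintype V] {G : SimpleGraph V} (_hG : G.Connected) {E : Set (Sym2 V)} {c v t : V}
    {ρ : ℕ} {R : ℝ} (hR : (ρ : ℝ) ≤ R)
    (hstar : ∀ x, G.dist c x ≤ ρ → s(c, x) ∈ E)
    (hv : G.dist c v ≤ ρ) (ht : G.dist c t ≤ ρ) : RB G E v t (G.dist v t + 2 * R) := by
  have h1 : RB G E c v _ := RB.edge (hstar v hv)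
  have h2 : RB G E c t _ := RB.edge (hstar t ht)
  refine (h1.symm.trans h2).mono le_rfl ?_
  have a : (G.dist c v : ℝ) ≤ ρ := by exact_mod_cast hv
  have b : (G.dist c t : ℝ) ≤ ρ := by exact_mod_cast ht
  have : (0 : ℝ) ≤ G.dist v t := by positivity
  linarith

/-- main induction -/
lemma prefix_lemma [Fintype V] {G : SimpleGraph V} (hG : G.Connected) {E : Set (Sym2 V)}
    (home : V → V) (ρ : V → ℕ) (R K : ℝ) (hK : 0 ≤ K) (a : V → ℝ) (L : Finset V) (Q : Set V)
    (hR : ∀ c, (ρ c : ℝ) ≤ R)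
    (hhome : ∀ v, G.dist (home v) v < ρ (home v))
    (hstar : ∀ v x, G.dist (home v) x ≤ ρ (home v) → s(home v, x) ∈ E)
    (hQ : ∀ v x, G.dist (home v) x = ρ (home v) → x ∈ Q)
    (hsmall : ∀ v ∈ Q, home v ∉ L → ∀ x, G.dist (home v) x = ρ (home v) → s(v, x) ∈ E)
    (hlarge : ∀ c ∈ L, ∀ x y, G.dist c x ≤ ρ c → G.dist c y ≤ ρ c →
      RB G E x y (G.dist x y + K * a c)) (t : V) :
    ∀ N : ℕ, ∀ v ∈ Q, G.dist v t ≤ N → ∀ b : ℝ, 0 < b → 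
      RB G E v t (G.dist v t + K * b + 2 * R) ∨
      ∃ X : Finset V, X ⊆ L ∧ b ≤ ∑ c ∈ X, a c ∧ ∀ c ∈ X, ∃ u, home u = c ∧
        G.dist v u + G.dist u t = G.dist v t ∧ RB G E v u (G.dist v u + K * b) := by
  classical
  intro N
  induction N with
  | zero =>
    intro v hv h0 b hb
    left
    have h5 : v = t := (hG.dist_eq_zero_iff).1 (by omega)
    subst h5
    refine (star_reach hG (hR (home v)) (hstar v) (hhome v).le (hhome v).le).mono le_rfl ?_
    have : 0 ≤ K * b := by positivity
    linarith
  | succ N ih =>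
    intro v hv hN b hb
    have hKb : 0 ≤ K * b := by positivity
    by_cases ht : G.dist (home v) t ≤ ρ (home v)
    · left
      refine (star_reach hG (hR (home v)) (hstar v) (hhome v).le ht).mono le_rfl ?_
      linarith
    push Not at ht
    obtain ⟨v', h1, h2, h3⟩ := next_exists hG (home v) v t _ (hhome v) ht
    have hne : G.dist v v' ≠ 0 := by
      intro h0
      have h5 : v = v' := (hG.dist_eq_zero_iff).1 h0
      have := hhome v
      rw [← h5] at h1
      omega
    have hv'Q := hQ v v' h1
    have htr : ∀ u, G.dist v' u + G.dist u t = G.dist v' t →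
        G.dist v u = G.dist v v' + G.dist v' u ∧ G.dist v u + G.dist u t = G.dist v t := by
      intro x hx
      have a := hG.dist_triangle (u := v) (v := v') (w := x)
      have b := hG.dist_triangle (u := v) (v := x) (w := t)
      omega
    have h2' : (G.dist v v' : ℝ) + G.dist v' t = G.dist v t := by exact_mod_cast h2
    by_cases hL : home v ∈ L
    · by_cases hab : b ≤ a (home v)
      · right
        refine ⟨{home v}, by simpa using hL, by simpa using hab, ?_⟩
        intro c hc
        rw [Finset.mem_singleton] at hc
        exact ⟨v, hc.symm, by simp, ⟨0, Reach.refl v, by simpa using hKb⟩⟩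
      · push Not at hab
        have hstep := hlarge _ hL v v' (hhome v).le h1.le
        rcases ih v' hv'Q (by omega) (b - a (home v)) (by linarith) with h | ⟨X, hX1, hX2, hX3⟩
        · left
          refine (hstep.trans h).mono le_rfl ?_
          linarith
        · right
          refine ⟨insert (home v) X, Finset.insert_subset hL hX1, ?_, ?_⟩
          · rw [Finset.sum_insert]
            · linarith
            · intro hmem
              obtain ⟨u, hu1, hu2, -⟩ := hX3 _ hmem
              have := hhome u
              rw [hu1] at this
              exact h3 u hu2 this
          · intro c hc
            rw [Finset.mem_insert] at hc
            rcases hc with hc | hc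
            · exact ⟨v, hc.symm, by simp, ⟨0, Reach.refl v, by simpa using hKb⟩⟩
            · obtain ⟨u, hu1, hu2, hu3⟩ := hX3 _ hc
              refine ⟨u, hu1, (htr u hu2).2, ?_⟩
              refine (hstep.trans hu3).mono le_rfl ?_
              have : (G.dist v u : ℝ) = G.dist v v' + G.dist v' u := by
                exact_mod_cast (htr u hu2).1
              linarith
    · have hstep : RB G E v v' _ := RB.edge (hsmall v hv hL v' h1)
      rcases ih v' hv'Q (by omega) b hb with h | ⟨X, hX1, hX2, hX3⟩
      · left
        refine (hstep.trans h).mono le_rfl ?_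
        linarith
      · right
        refine ⟨X, hX1, hX2, fun c hc => ?_⟩
        obtain ⟨u, hu1, hu2, hu3⟩ := hX3 _ hc
        refine ⟨u, hu1, (htr u hu2).2, ?_⟩
        refine (hstep.trans hu3).mono le_rfl ?_
        have : (G.dist v u : ℝ) = G.dist v v' + G.dist v' u := by
          exact_mod_cast (htr u hu2).1
        linarith

/-- the same from an arbitrary start -/
lemma prefix_lemma' [Fintype V] {G : SimpleGraph V} (hG : G.Connected) {E : Set (Sym2 V)}
    (home : V → V) (ρ : V → ℕ) (R K : ℝ) (hK : 0 ≤ K) (a : V → ℝ) (L : Finset V) (Q : Set V)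
    (hR : ∀ c, (ρ c : ℝ) ≤ R)
    (hhome : ∀ v, G.dist (home v) v < ρ (home v))
    (hstar : ∀ v x, G.dist (home v) x ≤ ρ (home v) → s(home v, x) ∈ E)
    (hQ : ∀ v x, G.dist (home v) x = ρ (home v) → x ∈ Q)
    (hsmall : ∀ v ∈ Q, home v ∉ L → ∀ x, G.dist (home v) x = ρ (home v) → s(v, x) ∈ E)
    (hlarge : ∀ c ∈ L, ∀ x y, G.dist c x ≤ ρ c → G.dist c y ≤ ρ c →
      RB G E x y (G.dist x y + K * a c)) (b : ℝ) (hb : 0 < b) (s t : V) :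
      RB G E s t (G.dist s t + K * b + 4 * R) ∨
      ∃ X : Finset V, X ⊆ L ∧ b ≤ ∑ c ∈ X, a c ∧ ∀ c ∈ X, ∃ u, home u = c ∧
        G.dist s u + G.dist u t = G.dist s t ∧ RB G E s u (G.dist s u + K * b + 2 * R) := by
  have hKb : 0 ≤ K * b := by positivity
  have hR0 : 0 ≤ R := le_trans (by positivity) (hR s)
  by_cases ht : G.dist (home s) t ≤ ρ (home s)
  · left
    refine (star_reach hG (hR (home s)) (hstar s) (hhome s).le ht).mono le_rfl ?_
    linarith
  push Not at ht
  obtain ⟨v', h1, h2, h3⟩ := next_exists hG (home s) s t _ (hhome s) ht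
  have hstep := star_reach hG (hR (home s)) (hstar s) (hhome s).le h1.le
  have h2' : (G.dist s v' : ℝ) + G.dist v' t = G.dist s t := by exact_mod_cast h2
  rcases prefix_lemma hG home ρ R K hK a L Q hR hhome hstar hQ hsmall hlarge t _ v' (hQ s v' h1)
    le_rfl b hb with h | ⟨X, hX1, hX2, hX3⟩
  · left
    refine (hstep.trans h).mono le_rfl ?_
    linarith
  · right
    refine ⟨X, hX1, hX2, fun c hc => ?_⟩
    obtain ⟨u, hu1, hu2, hu3⟩ := hX3 _ hc
    have htr : G.dist s u = G.dist s v' + G.dist v' u ∧ G.dist s u + G.dist u t = G.dist s t := by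
      have a := hG.dist_triangle (u := s) (v := v') (w := u)
      have b := hG.dist_triangle (u := s) (v := u) (w := t)
      omega
    refine ⟨u, hu1, htr.2, ?_⟩
    refine (hstep.trans hu3).mono le_rfl ?_
    have : (G.dist s u : ℝ) = G.dist s v' + G.dist v' u := by exact_mod_cast htr.1
    linarith

/-- combine with hubs -/
lemma hub_lemma [Fintype V] {G : SimpleGraph V} (hG : G.Connected) {E : Set (Sym2 V)}
    (home : V → V) (ρ : V → ℕ) (R K : ℝ) (hK : 0 ≤ K) (a : V → ℝ) (ha : ∀ v, 0 ≤ a v)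
    (L : Finset V) (Q : Set V)
    (hR : ∀ c, (ρ c : ℝ) ≤ R)
    (hhome : ∀ v, G.dist (home v) v < ρ (home v))
    (hstar : ∀ v x, G.dist (home v) x ≤ ρ (home v) → s(home v, x) ∈ E)
    (hQ : ∀ v x, G.dist (home v) x = ρ (home v) → x ∈ Q)
    (hsmall : ∀ v ∈ Q, home v ∉ L → ∀ x, G.dist (home v) x = ρ (home v) → s(v, x) ∈ E)
    (hlarge : ∀ c ∈ L, ∀ x y, G.dist c x ≤ ρ c → G.dist c y ≤ ρ c →
      RB G E x y (G.dist x y + K * a c)) (b : ℝ) (hb : 0 < b) (A : ℝ) (hA0 : 0 < A)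
    (hA : ∑ c ∈ L, a c ≤ A) :
    ∃ Z : Finset V, (Z.card : ℝ) ≤ A / b * (2 * Real.log (Fintype.card V)) + 1 ∧
      ∀ E' : Set (Sym2 V), E ⊆ E' → (∀ x ∈ Z, ∀ y ∈ Z, s(x, y) ∈ E') →
        ∀ s t, RB G E' s t (G.dist s t + 2 * K * b + 8 * R) := by
  classical
  have hP := prefix_lemma' hG home ρ R K hK a L Q hR hhome hstar hQ hsmall hlarge b hb
  let good : V × V → Prop := fun q => RB G E q.1 q.2 (G.dist q.1 q.2 + K * b + 4 * R)
  have hP' : ∀ q : V × V, ∃ X : Finset V, ¬ good q → (X ⊆ L ∧ b ≤ ∑ c ∈ X, a c ∧ 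
      ∀ c ∈ X, ∃ u, home u = c ∧
        G.dist q.1 u + G.dist u q.2 = G.dist q.1 q.2 ∧
        RB G E q.1 u (G.dist q.1 u + K * b + 2 * R)) := by
    intro q
    rcases hP q.1 q.2 with h | ⟨X, h⟩
    · exact ⟨∅, fun h' => absurd h h'⟩
    · exact ⟨X, fun _ => h⟩
  choose X hX using hP'
  obtain ⟨Z, hZ1, hZ2, hZ3⟩ := hitting (Finset.univ.filter fun q => ¬ good q) X L a ha b hb
    (fun q hq => by
      have := hX q (by simpa using hq)
      exact ⟨this.1, this.2.1⟩) A hA hA0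
  refine ⟨Z, hZ1.trans ?_, ?_⟩
  · have h1 : Real.log ((Finset.univ.filter fun q => ¬ good q).card) ≤ 2 * Real.log (Fintype.card V) := by
      have h2 : (Finset.univ.filter fun q => ¬ good q).card ≤ Fintype.card V ^ 2 := by
        refine (Finset.card_le_univ _).trans ?_
        rw [Fintype.card_prod, sq]
      rcases Nat.eq_zero_or_pos (Finset.univ.filter fun q => ¬ good q).card with h0 | h0
      · rw [h0]
        simp only [Nat.cast_zero, Real.log_zero]
        have := Real.log_natCast_nonneg (Fintype.card V)
        positivity
      · have : Real.log ((Finset.univ.filter fun q => ¬ good q).card) ≤ Real.log ((Fintype.card V : ℝ) ^ 2) := by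
          refine Real.log_le_log (by exact_mod_cast h0) (by exact_mod_cast h2)
        rw [Real.log_pow] at this
        exact_mod_cast this
    gcongr
  · intro E' hE hZE s t
    have hKb : 0 ≤ K * b := by positivity
    have hR0 : 0 ≤ R := le_trans (by positivity) (hR s)
    have hub : ∀ x y, good (x, y) ∨ ∃ h ∈ Z, ∃ u, home u = h ∧ G.dist x u + G.dist u y = G.dist x y ∧
        RB G E x u (G.dist x u + K * b + 2 * R) := by
      intro x y
      by_cases hg : good (x, y)
      · exact Or.inl hg
      · right
        obtain ⟨h, hhZ, hhX⟩ := hZ3 (x, y) (by simpa using hg)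
        exact ⟨h, hhZ, (hX (x, y) hg).2.2 h hhX⟩
    rcases hub s t with h | ⟨h1, hh1, u1, e1, d1, r1⟩
    · exact RB.mono hE h (by simp only; nlinarith)
    have d1' : (G.dist s u1 : ℝ) + G.dist u1 t = G.dist s t := by exact_mod_cast d1
    rcases hub t u1 with h | ⟨h2, hh2, u2, e2, d2, r2⟩
    · refine (r1.trans h.symm).mono hE ?_
      simp only
      rw [G.dist_comm (u := t)]
      nlinarith
    have d2' : (G.dist t u2 : ℝ) + G.dist u2 u1 = G.dist t u1 := by exact_mod_cast d2
    have s1 : RB G E' h1 u1 R := by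
      have := hhome u1
      subst e1
      refine (RB.edge (hstar u1 u1 this.le)).mono hE (le_trans ?_ (hR (home u1)))
      exact_mod_cast this.le
    have s2 : RB G E' h2 u2 R := by
      have := hhome u2
      subst e2
      refine (RB.edge (hstar u2 u2 this.le)).mono hE (le_trans ?_ (hR (home u2)))
      exact_mod_cast this.le
    have s3 : RB G E' h1 h2 _ := RB.edge (hZE h1 hh1 h2 hh2)
    have hd : (G.dist h1 h2 : ℝ) ≤ 2 * R + G.dist u2 u1 := by
      have q1 : (G.dist h1 u1 : ℝ) ≤ R := by
        subst e1
        refine le_trans ?_ (hR (home u1))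
        exact_mod_cast (hhome u1).le
      have q2 : (G.dist h2 u2 : ℝ) ≤ R := by
        subst e2
        refine le_trans ?_ (hR (home u2))
        exact_mod_cast (hhome u2).le
      have t1 := hG.dist_triangle (u := h1) (v := u1) (w := h2)
      have t2 := hG.dist_triangle (u := u1) (v := u2) (w := h2)
      rw [G.dist_comm (u := u1) (v := u2), G.dist_comm (u := u2) (v := h2)] at t2
      have t3 : (G.dist h1 h2 : ℝ) ≤ G.dist h1 u1 + (G.dist u2 u1 + G.dist h2 u2) := by
        exact_mod_cast t1.trans (by omega)
      linarith
    refine ((((r1.mono hE le_rfl).trans s1.symm).trans s3).trans (s2.trans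
      (r2.symm.mono hE le_rfl))).mono le_rfl ?_
    have : G.dist t u1 = G.dist u1 t := G.dist_comm
    rw [this] at d2'
    nlinarith


lemma assemble [Fintype V] {G : SimpleGraph V} (hG : G.Connected) (C β η : ℝ) (hC : 0 < C)
    (hβ0 : 0 < β) (hβ1 : β < 1) (hη : 0 < η)
    (hyp : ∀ m : ℕ, ∀ G' : SimpleGraph (Fin m), G'.Connected →
        ∃ (H' : SimpleGraph (Fin m)) (w' : Sym2 (Fin m) → ℕ),
          IsAdditiveEmulator G' H' w' ⌈C * (m : ℝ) ^ β⌉₊ ∧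
          (H'.edgeSet.ncard : ℝ) ≤ C * m) (r : ℕ) (hr : 0 < r) :
    ∃ (E : Finset (Sym2 V)) (z : ℕ),
      (E.card : ℝ) ≤ (8 : ℝ) ^ (1 / η) * Fintype.card V * (2 + C) + (z : ℝ) ^ 2 ∧
      (z : ℝ) ≤ ((8 : ℝ) ^ (1 / η) * Fintype.card V * ((r : ℝ) ^ 2) ^ (β - 1)) / r *
        (2 * Real.log (Fintype.card V)) + 1 ∧
      ∀ s t, RB G E s t (G.dist s t + 2 * (C + 1) * r + 
        8 * (4 * (r * (Fintype.card V : ℝ) ^ η))) := by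
  classical
  obtain ⟨I, ρ, h1, h2, h3, h4⟩ := clusters hG η hη r hr
  choose home hhI hhome using h1
  choose Ec hEc1 hEc2 using fun c => local_emul hG C β hyp c (ρ c)
  set D : ℝ := (8 : ℝ) ^ (1 / η) with hD
  have hD0 : 0 < D := by positivity
  have hne : Nonempty V := hG.nonempty
  have hn : (0 : ℝ) < Fintype.card V := by exact_mod_cast Fintype.card_pos
  have hr' : (0 : ℝ) < r := by exact_mod_cast hr
  let L := I.filter fun c => r < (sp G c (ρ c)).card
  let Q := I.biUnion fun c => sp G c (ρ c)
  let E1 : Finset (Sym2 V) := I.biUnion fun c => (bl G c (ρ c)).image fun x => s(c, x)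
  let E2 : Finset (Sym2 V) := (Q.filter fun v => (sp G (home v) (ρ (home v))).card ≤ r).biUnion
    fun v => (sp G (home v) (ρ (home v))).image fun x => s(v, x)
  let E3 : Finset (Sym2 V) := I.biUnion fun c => (Set.toFinite (Ec c)).toFinset
  let E0 := E1 ∪ E2 ∪ E3
  let a : V → ℝ := fun c => ((bl G c (2 * ρ c)).card : ℝ) ^ β
  have ha : ∀ v, 0 ≤ a v := fun v => by positivity
  have hA : ∑ c ∈ L, a c ≤ D * Fintype.card V * ((r : ℝ) ^ 2) ^ (β - 1) := by
    calc ∑ c ∈ L, a c ≤ ∑ c ∈ L, ((bl G c (2 * ρ c)).card : ℝ) * ((r : ℝ) ^ 2) ^ (β - 1) := by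
          refine Finset.sum_le_sum fun c hc => ?_
          have hb := bl_pos G c (2 * ρ c)
          have hb' : (0 : ℝ) < (bl G c (2 * ρ c)).card := by exact_mod_cast hb
          have hrb : (r : ℝ) ^ 2 ≤ (bl G c (2 * ρ c)).card := by
            have q1 := (Finset.mem_filter.1 hc).2
            have q2 := h4 c
            have : r ^ 2 ≤ (bl G c (2 * ρ c)).card := by nlinarith
            exact_mod_cast this
          have : a c = ((bl G c (2 * ρ c)).card : ℝ) * ((bl G c (2 * ρ c)).card : ℝ) ^ (β - 1) := by
            simp only [a]
            rw [← Real.rpow_one_add' hb'.le (by linarith)]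
            congr 1; ring
          rw [this]
          refine mul_le_mul_of_nonneg_left ?_ hb'.le
          exact Real.rpow_le_rpow_of_nonpos (by positivity) hrb (by linarith)
      _ ≤ ∑ c ∈ I, ((bl G c (2 * ρ c)).card : ℝ) * ((r : ℝ) ^ 2) ^ (β - 1) := by
          refine Finset.sum_le_sum_of_subset_of_nonneg (Finset.filter_subset _ _) fun _ _ _ => by positivity
      _ ≤ _ := by
          rw [← Finset.sum_mul]
          gcongr
  have hsub1 : E1 ⊆ E0 := fun x hx => by simp only [E0, Finset.mem_union]; tauto
  have hsub2 : E2 ⊆ E0 := fun x hx => by simp only [E0, Finset.mem_union]; tauto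
  have hsub3 : E3 ⊆ E0 := fun x hx => by simp only [E0, Finset.mem_union]; tauto
  obtain ⟨Z, hZ1, hZ2⟩ := hub_lemma hG (E := (E0 : Set (Sym2 V))) home ρ
    (4 * (r * (Fintype.card V : ℝ) ^ η)) (C + 1) (by linarith) a ha L (Q : Set V) h2 hhome
    (fun v x hx => hsub1 (Finset.mem_biUnion.2 ⟨home v, hhI v, Finset.mem_image.2
      ⟨x, mem_bl.2 hx, rfl⟩⟩))
    (fun v x hx => Finset.mem_coe.2 (Finset.mem_biUnion.2 ⟨home v, hhI v, mem_sp.2 hx⟩))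
    (fun v hv hL x hx => hsub2 (Finset.mem_biUnion.2 ⟨v, Finset.mem_filter.2 ⟨hv, by
        by_contra hcon
        exact hL (Finset.mem_filter.2 ⟨hhI v, by omega⟩)⟩, 
      Finset.mem_image.2 ⟨x, mem_sp.2 hx, rfl⟩⟩))
    (fun c hc x y hx hy => by
      refine (hEc2 c x y hx hy).mono ?_ ?_
      · intro e he
        exact hsub3 (Finset.mem_biUnion.2 ⟨c, (Finset.mem_filter.1 hc).1, by simpa using he⟩)
      · have hb : (1 : ℝ) ≤ (bl G c (2 * ρ c)).card := by exact_mod_cast bl_pos G c (2 * ρ c)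
        have h5 : (1 : ℝ) ≤ a c := Real.one_le_rpow hb hβ0.le
        have h6 := (Nat.ceil_lt_add_one (a := C * a c) (by have := ha c; positivity)).le
        have h7 : ((⌈C * ((bl G c (2 * ρ c)).card : ℝ) ^ β⌉₊ : ℕ) : ℝ) ≤ C * a c + 1 := h6
        linarith)
    r hr' _ (by positivity) hA
  refine ⟨E0 ∪ (Z ×ˢ Z).image (fun p => s(p.1, p.2)), Z.card, ?_, hZ1, ?_⟩
  · have c1 : (E1.card : ℝ) ≤ D * Fintype.card V := by
      refine le_trans ?_ h3
      have : E1.card ≤ ∑ c ∈ I, (bl G c (2 * ρ c)).card := by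
        refine Finset.card_biUnion_le.trans (Finset.sum_le_sum fun c _ => ?_)
        exact Finset.card_image_le.trans (Finset.card_le_card (bl_mono G c (by omega)))
      exact_mod_cast this
    have c2 : (E2.card : ℝ) ≤ D * Fintype.card V := by
      refine le_trans ?_ h3
      have : E2.card ≤ ∑ c ∈ I, (bl G c (2 * ρ c)).card := by
        calc E2.card ≤ ∑ v ∈ Q.filter fun v => (sp G (home v) (ρ (home v))).card ≤ r, r := by
              refine Finset.card_biUnion_le.trans (Finset.sum_le_sum fun v hv => ?_)
              exact Finset.card_image_le.trans (Finset.mem_filter.1 hv).2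
          _ ≤ Q.card * r := by
              rw [Finset.sum_const, smul_eq_mul]
              exact Nat.mul_le_mul_right _ (Finset.card_filter_le _ _)
          _ ≤ (∑ c ∈ I, (sp G c (ρ c)).card) * r := Nat.mul_le_mul_right _ Finset.card_biUnion_le
          _ ≤ _ := by
              rw [Finset.sum_mul]
              exact Finset.sum_le_sum fun c _ => h4 c
      exact_mod_cast this
    have c3 : (E3.card : ℝ) ≤ C * (D * Fintype.card V) := by
      calc (E3.card : ℝ) ≤ ∑ c ∈ I, ((Ec c).ncard : ℝ) := by
            have : E3.card ≤ ∑ c ∈ I, (Ec c).ncard := by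
              refine Finset.card_biUnion_le.trans (Finset.sum_le_sum fun c _ => ?_)
              rw [Set.ncard_eq_toFinset_card _ (Set.toFinite (Ec c))]
            exact_mod_cast this
        _ ≤ ∑ c ∈ I, C * ((bl G c (2 * ρ c)).card : ℝ) := Finset.sum_le_sum fun c _ => hEc1 c
        _ ≤ _ := by
            rw [← Finset.mul_sum]
            gcongr
    have c4 : (((Z ×ˢ Z).image (fun p => s(p.1, p.2))).card : ℝ) ≤ (Z.card : ℝ) ^ 2 := by
      have : ((Z ×ˢ Z).image (fun p => s(p.1, p.2))).card ≤ Z.card ^ 2 := by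
        refine Finset.card_image_le.trans ?_
        rw [Finset.card_product, sq]
      exact_mod_cast this
    have c5 : ((E0 ∪ (Z ×ˢ Z).image (fun p => s(p.1, p.2))).card : ℝ) ≤
        E1.card + E2.card + E3.card + ((Z ×ˢ Z).image (fun p => s(p.1, p.2))).card := by
      have q1 := Finset.card_union_le E0 ((Z ×ˢ Z).image (fun p => s(p.1, p.2)))
      have q2 : E0.card ≤ _ := Finset.card_union_le (E1 ∪ E2) E3
      have q3 := Finset.card_union_le E1 E2
      exact_mod_cast (by omega)
    linarith
  · refine hZ2 _ ?_ ?_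
    · exact_mod_cast Finset.subset_union_left
    · intro x hx y hy
      refine Finset.mem_coe.2 (Finset.mem_union_right _ (Finset.mem_image.2 ⟨(x, y), ?_, rfl⟩))
      exact Finset.mem_product.2 ⟨hx, hy⟩

end Emul

theorem emulator_recursion (α : ℝ) (hα0 : 0 < α) (hα1 : α < 1)
    (hyp : ∀ ε : ℝ, 0 < ε → ∃ C : ℝ, 0 < C ∧
      ∀ m : ℕ, ∀ G' : SimpleGraph (Fin m), G'.Connected →
        ∃ (H' : SimpleGraph (Fin m)) (w' : Sym2 (Fin m) → ℕ),
          IsAdditiveEmulator G' H' w' ⌈C * (m : ℝ) ^ (α + ε)⌉₊ ∧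
          (H'.edgeSet.ncard : ℝ) ≤ C * m) :
    ∀ ε : ℝ, 0 < ε → ∃ C' : ℝ, 0 < C' ∧
      ∀ n : ℕ, ∀ G : SimpleGraph (Fin n), G.Connected →
        ∃ (H : SimpleGraph (Fin n)) (w : Sym2 (Fin n) → ℕ),
          IsAdditiveEmulator G H w ⌈C' * (n : ℝ) ^ (1 / (6 - 4 * α) + ε)⌉₊ ∧
          (H.edgeSet.ncard : ℝ) ≤ C' * n := by
  intro ε hε
  set σ : ℝ := 1 / (6 - 4 * α) + ε / 2 with hσ
  have hden : 0 < 6 - 4 * α := by linarith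
  have hσ0 : 0 < σ := by positivity
  set ε' : ℝ := min ((1 - α) / 2) (ε / (8 * σ)) with hε'
  have hε'0 : 0 < ε' := lt_min (by linarith) (by positivity)
  have hε'1 : ε' ≤ (1 - α) / 2 := min_le_left _ _
  have hε'2 : ε' * (8 * σ) ≤ ε := by
    have : ε' ≤ ε / (8 * σ) := min_le_right _ _
    rwa [le_div_iff₀ (by positivity)] at this
  obtain ⟨C, hC, hypC⟩ := hyp ε' hε'0
  set β := α + ε' with hβ
  have hβ1 : β < 1 := by linarith
  have hexp : 1 / 2 + ε / 4 ≤ σ * (3 - 2 * β) := by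
    have e1 : σ * (3 - 2 * α) = 1 / 2 + ε / 2 * (3 - 2 * α) := by
      rw [hσ]; field_simp; ring
    have e2 : σ * (3 - 2 * β) = σ * (3 - 2 * α) - 2 * (ε' * σ) := by rw [hβ]; ring
    rw [e2, e1]
    nlinarith
  set D : ℝ := (8 : ℝ) ^ (1 / (ε / 2)) with hD
  have hD0 : 0 < D := by positivity
  set M : ℝ := D * (2 + C) + (8 * D / ε + 1) ^ 2 with hM
  set K : ℝ := 2 * (2 * (C + 1) + 32) with hK
  have hM0 : 0 < M := by positivity
  have hK0 : 0 < K := by positivity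
  refine ⟨M + K, by positivity, fun n G hG => ?_⟩
  have hn0 : 0 < n := by
    have := hG.nonempty
    exact Fin.pos_iff_nonempty.2 this
  have hn1 : (1 : ℝ) ≤ n := by exact_mod_cast hn0
  have hn : (0 : ℝ) < n := by linarith
  set r : ℕ := ⌈(n : ℝ) ^ σ⌉₊ with hr
  have hns : (1 : ℝ) ≤ (n : ℝ) ^ σ := Real.one_le_rpow hn1 hσ0.le
  have hr1 : (n : ℝ) ^ σ ≤ r := Nat.le_ceil _
  have hr2 : (r : ℝ) ≤ 2 * (n : ℝ) ^ σ := by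
    have := (Nat.ceil_lt_add_one (a := (n : ℝ) ^ σ) (by positivity)).le
    linarith
  have hr0' : (0 : ℝ) < r := by linarith
  have hr0 : 0 < r := by exact_mod_cast hr0'
  obtain ⟨E, z, hE, hz, hRB⟩ := assemble hG C β (ε / 2) hC (by linarith) hβ1 (by positivity)
    hypC r hr0
  rw [Fintype.card_fin] at hE hz hRB
  rw [← hD] at hE hz
  have hη1 : (1 : ℝ) ≤ (n : ℝ) ^ (ε / 2) := Real.one_le_rpow hn1 (by positivity)
  refine ⟨SimpleGraph.fromEdgeSet (E : Set (Sym2 (Fin n))), dw G, ?_, ?_⟩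
  · refine emulator_of_RB hG _ _ fun s t => (hRB s t).mono le_rfl ?_
    have h1 : (n : ℝ) ^ (1 / (6 - 4 * α) + ε) = (n : ℝ) ^ σ * (n : ℝ) ^ (ε / 2) := by
      rw [← Real.rpow_add hn]
      congr 1; rw [hσ]; ring
    have h2 : 2 * (C + 1) * r + 8 * (4 * (r * (n : ℝ) ^ (ε / 2))) ≤
        (M + K) * (n : ℝ) ^ (1 / (6 - 4 * α) + ε) := by
      rw [h1]
      calc 2 * (C + 1) * r + 8 * (4 * (r * (n : ℝ) ^ (ε / 2)))
          ≤ 2 * (C + 1) * (r * (n : ℝ) ^ (ε / 2)) + 8 * (4 * (r * (n : ℝ) ^ (ε / 2))) := by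
            have : (r : ℝ) ≤ r * (n : ℝ) ^ (ε / 2) := le_mul_of_one_le_right hr0'.le hη1
            gcongr
        _ = (2 * (C + 1) + 32) * (r * (n : ℝ) ^ (ε / 2)) := by ring
        _ ≤ (2 * (C + 1) + 32) * ((2 * (n : ℝ) ^ σ) * (n : ℝ) ^ (ε / 2)) := by gcongr
        _ = K * ((n : ℝ) ^ σ * (n : ℝ) ^ (ε / 2)) := by rw [hK]; ring
        _ ≤ _ := by
            gcongr
            linarith
    have h3 := Nat.le_ceil ((M + K) * (n : ℝ) ^ (1 / (6 - 4 * α) + ε))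
    linarith
  · have hcard : ((SimpleGraph.fromEdgeSet (E : Set (Sym2 (Fin n)))).edgeSet.ncard : ℝ) ≤ E.card := by
      have : (SimpleGraph.fromEdgeSet (E : Set (Sym2 (Fin n)))).edgeSet.ncard ≤ E.card := by
        rw [← Set.ncard_coe_finset E]
        refine Set.ncard_le_ncard ?_ (Set.toFinite _)
        rw [SimpleGraph.edgeSet_fromEdgeSet]
        exact Set.sdiff_subset
      exact_mod_cast this
    have hzz : (z : ℝ) ≤ (8 * D / ε + 1) * (n : ℝ) ^ (1 / 2 : ℝ) := by
      have g1 : ((r : ℝ) ^ 2) ^ (β - 1) / r = (r : ℝ) ^ (2 * β - 3) := by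
        rw [← Real.rpow_natCast, ← Real.rpow_mul hr0'.le, ← Real.rpow_sub_one hr0'.ne']
        congr 1; push_cast; ring
      have g2 : (r : ℝ) ^ (2 * β - 3) ≤ (n : ℝ) ^ (-(1 / 2 + ε / 4)) := by
        calc (r : ℝ) ^ (2 * β - 3) ≤ ((n : ℝ) ^ σ) ^ (2 * β - 3) :=
              Real.rpow_le_rpow_of_nonpos (by positivity) hr1 (by linarith)
          _ = (n : ℝ) ^ (σ * (2 * β - 3)) := by rw [← Real.rpow_mul hn.le]
          _ ≤ _ := Real.rpow_le_rpow_of_exponent_le hn1 (by linarith)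
      have g3 : Real.log n ≤ (n : ℝ) ^ (ε / 4) / (ε / 4) :=
        Real.log_le_rpow_div hn.le (by positivity)
      have hlog0 : 0 ≤ Real.log n := Real.log_natCast_nonneg n
      have g4 : (n : ℝ) * (n : ℝ) ^ (-(1 / 2 + ε / 4)) * (n : ℝ) ^ (ε / 4) = (n : ℝ) ^ (1 / 2 : ℝ) := by
        have e : (n : ℝ) * (n : ℝ) ^ (-(1 / 2 + ε / 4)) = (n : ℝ) ^ (1 + -(1 / 2 + ε / 4)) := by
          rw [Real.rpow_add hn, Real.rpow_one]
        rw [e, ← Real.rpow_add hn]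
        congr 1; ring
      have g5 : (1 : ℝ) ≤ (n : ℝ) ^ (1 / 2 : ℝ) := Real.one_le_rpow hn1 (by norm_num)
      calc (z : ℝ) ≤ _ := hz
        _ = D * n * (((r : ℝ) ^ 2) ^ (β - 1) / r) * (2 * Real.log n) + 1 := by ring
        _ = D * n * (r : ℝ) ^ (2 * β - 3) * (2 * Real.log n) + 1 := by rw [g1]
        _ ≤ D * n * (n : ℝ) ^ (-(1 / 2 + ε / 4)) * (2 * ((n : ℝ) ^ (ε / 4) / (ε / 4))) + 1 := by gcongr
        _ = 8 * D / ε * ((n : ℝ) * (n : ℝ) ^ (-(1 / 2 + ε / 4)) * (n : ℝ) ^ (ε / 4)) + 1 := by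
            field_simp; ring
        _ = 8 * D / ε * (n : ℝ) ^ (1 / 2 : ℝ) + 1 := by rw [g4]
        _ ≤ _ := by linarith
    have hz2 : (z : ℝ) ^ 2 ≤ (8 * D / ε + 1) ^ 2 * n := by
      calc (z : ℝ) ^ 2 ≤ ((8 * D / ε + 1) * (n : ℝ) ^ (1 / 2 : ℝ)) ^ 2 := by gcongr
        _ = (8 * D / ε + 1) ^ 2 * ((n : ℝ) ^ (1 / 2 : ℝ)) ^ 2 := by ring
        _ = _ := by
            rw [← Real.rpow_natCast ((n : ℝ) ^ (1 / 2 : ℝ)), ← Real.rpow_mul hn.le]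
            norm_num
    calc _ ≤ _ := hcard
      _ ≤ _ := hE
      _ ≤ D * n * (2 + C) + (8 * D / ε + 1) ^ 2 * n := by linarith
      _ = M * n := by rw [hM]; ring
      _ ≤ (M + K) * n := by
          gcongr
          linarith
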